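/- Let S and A be nonempty finite sets and, for θ ∈ ℝ^{S×A}, let H(π_θ) ∈ ℝ^S be the vector of per-state entropies H(π_θ)(s) = −Σ_{a∈A} π_θ(a|s)·log π_θ(a|s). Then for all θ, u, v, w ∈ ℝ^{S×A}: (i) ‖dH(π_θ)[u]‖_∞ ≤ 2·log|A|·‖u‖_∞; (ii) ‖d²H(π_θ)[u,v]‖_∞ ≤ (4 + 8·log|A|)·‖u‖_∞·‖v‖_∞; (iii) ‖d³H(π_θ)[u,v,w]‖_∞ ≤ (56 + 48·log|A|)·‖u‖_∞·‖v‖_∞·‖w‖_∞. -/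

import Mathlib

/-!
Moving the logits in a direction `w` tilts the probability vector `p = π_θ(·|s)` exponentially:
`p' = p * (w - E_p w)`. Differentiating a joint cumulant under `p` along such a tilt appends `w` to
its arguments, and the surprisal `σ = -log p` moves by `-(w - E_p w)`. As the entropy is `E_p σ`,
its successive derivatives are

* `κ₂(σ, u)`,
* `κ₃(σ, u, v) - κ₂(u, v)`,
* `κ₄(σ, u, v, w) - 2 κ₃(u, v, w)`.

Up to a numerical factor, each cumulant is bounded by `E_p |f|` for its first argument `f` times
the sup norms of the others, and `E_p |σ|` is the entropy itself, which is at most `log |A|`. The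
resulting constants `2 log |A|`, `2 + 8 log |A|` and `16 + 28 log |A|` are no larger than the ones
claimed.
-/

open scoped BigOperators

/-- The softmax policy `π_θ(a|s) = exp θ(s,a) / Σ_{a'} exp θ(s,a')`. -/
noncomputable def softmax {S A : Type*} [Fintype A] (θ : S × A → ℝ) (s : S) (a : A) : ℝ :=
  Real.exp (θ (s, a)) / ∑ a' : A, Real.exp (θ (s, a'))

/-- The vector of per-state entropies `H(π_θ)(s) = -Σ_a π_θ(a|s) log π_θ(a|s)`. -/
noncomputable def entropyVec {S A : Type*} [Fintype A] (θ : S × A → ℝ) : S → ℝ :=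
  fun s => -∑ a : A, softmax θ s a * Real.log (softmax θ s a)

section IteratedDerivative

variable {E F : Type*} [NormedAddCommGroup E] [NormedSpace ℝ E] [NormedAddCommGroup F]
  [NormedSpace ℝ F]

theorem iteratedFDeriv_succ_vecCons_of_hasLineDerivAt {f g : E → F} {n : ℕ} {m : Fin n → E}
    {x v : E} {g' : F} (hf : ContDiffAt ℝ (n + 1) f x)
    (hg : ∀ y, iteratedFDeriv ℝ n f y m = g y) (hg' : HasLineDerivAt ℝ g g' x v) :
    iteratedFDeriv ℝ (n + 1) f x (Matrix.vecCons v m) = g' := by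
  have hdiff : DifferentiableAt ℝ (iteratedFDeriv ℝ n f) x :=
    hf.differentiableAt_iteratedFDeriv (by exact_mod_cast n.lt_succ_self)
  have hg_eq : (fun y => iteratedFDeriv ℝ n f y m) = g := funext hg
  have hg_diff : DifferentiableAt ℝ g x := hg_eq ▸ hdiff.continuousMultilinear_apply_const m
  calc iteratedFDeriv ℝ (n + 1) f x (Matrix.vecCons v m)
      = fderiv ℝ (iteratedFDeriv ℝ n f) x v m := iteratedFDeriv_succ_apply_left _
    _ = fderiv ℝ g x v := by rw [← fderiv_continuousMultilinear_apply_const_apply hdiff, hg_eq]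
    _ = g' := by rw [← hg_diff.lineDeriv_eq_fderiv, hg'.lineDeriv]

end IteratedDerivative

theorem norm_curry_apply_le {S A E : Type*} [Fintype S] [Fintype A] [SeminormedAddCommGroup E]
    (f : S × A → E) (s : S) : ‖Function.curry f s‖ ≤ ‖f‖ :=
  (pi_norm_le_iff_of_nonneg (norm_nonneg f)).2 fun a => norm_le_pi_norm f (s, a)

section FiniteProbability

variable {A : Type*} [Fintype A]

/-- The deviation `f - E_p f` of a random variable `f` on a finite space from its mean under the
weights `p`; means are written as dot products `p ⬝ᵥ f`. -/
noncomputable def centered (p f : A → ℝ) : A → ℝ :=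
  f - (p ⬝ᵥ f) • 1

/-- The second joint cumulant, i.e. the covariance, of `f` and `g` under the weights `p`. -/
noncomputable def cumulant₂ (p f g : A → ℝ) : ℝ :=
  p ⬝ᵥ (centered p f * centered p g)

/-- The third joint cumulant of `f`, `g` and `h` under the weights `p`. -/
noncomputable def cumulant₃ (p f g h : A → ℝ) : ℝ :=
  p ⬝ᵥ (centered p f * centered p g * centered p h)

/-- The fourth joint cumulant of `f`, `g`, `h` and `k` under the weights `p`, written through
central moments. -/
noncomputable def cumulant₄ (p f g h k : A → ℝ) : ℝ :=
  p ⬝ᵥ (centered p f * centered p g * centered p h * centered p k) -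
    cumulant₂ p f g * cumulant₂ p h k - cumulant₂ p f h * cumulant₂ p g k -
    cumulant₂ p f k * cumulant₂ p g h

/-- The surprisal `-log p` of the outcomes of a finite random variable with law `p`; the entropy
of `p` is its mean `p ⬝ᵥ surprisal p`. -/
noncomputable def surprisal (p : A → ℝ) : A → ℝ :=
  fun a => -Real.log (p a)

/-- At time `t`, the curve `p` of weights of total mass one moves by exponential tilting in the
direction `w`, as the curve with weights proportional to `exp (θ + t • w)` does. -/
structure HasTiltAt (p : ℝ → A → ℝ) (w : A → ℝ) (t : ℝ) : Prop where
  sum_eq_one : ∑ a, p t a = 1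
  hasDerivAt : HasDerivAt p (p t * centered (p t) w) t

section Centered

variable {p : A → ℝ}

theorem dotProduct_centered (hp : ∑ a, p a = 1) (f : A → ℝ) : p ⬝ᵥ centered p f = 0 := by
  rw [centered, dotProduct_sub, dotProduct_smul, dotProduct_one, hp, smul_eq_mul, mul_one,
    sub_self]

theorem centered_neg_centered (hp : ∑ a, p a = 1) (f : A → ℝ) :
    centered p (-centered p f) = -centered p f := by
  rw [centered, dotProduct_neg, dotProduct_centered hp, neg_zero, zero_smul, sub_zero]

@[simp]
theorem centered_zero (p : A → ℝ) : centered p 0 = 0 := by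
  simp [centered]

theorem dotProduct_mul_centered (hp : ∑ a, p a = 1) (f g : A → ℝ) :
    p ⬝ᵥ (f * centered p g) = cumulant₂ p f g := by
  rw [cumulant₂, centered.eq_def p f, sub_mul, smul_one_mul, dotProduct_sub, dotProduct_smul,
    dotProduct_centered hp, smul_zero, sub_zero]

end Centered

section Bounds

variable {p : A → ℝ}

theorem abs_dotProduct_mul_le (hp : 0 ≤ p) (f g : A → ℝ) :
    |p ⬝ᵥ (f * g)| ≤ p ⬝ᵥ |f| * ‖g‖ := by
  simp only [dotProduct, Finset.sum_mul]
  refine (Finset.abs_sum_le_sum_abs _ _).trans (Finset.sum_le_sum fun a _ => ?_)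
  rw [Pi.mul_apply, abs_mul, abs_mul, abs_of_nonneg (hp a), ← mul_assoc, Pi.abs_apply]
  exact mul_le_mul_of_nonneg_left (norm_le_pi_norm g a) (mul_nonneg (hp a) (abs_nonneg _))

theorem dotProduct_abs_le_norm (hp : p ∈ stdSimplex ℝ A) (f : A → ℝ) : p ⬝ᵥ |f| ≤ ‖f‖ :=
  calc p ⬝ᵥ |f| ≤ p ⬝ᵥ (‖f‖ • 1) :=
        dotProduct_le_dotProduct_of_nonneg_left
          (fun a => by simpa using norm_le_pi_norm f a) hp.1
    _ = ‖f‖ := by rw [dotProduct_smul, dotProduct_one, hp.2, smul_eq_mul, mul_one]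

theorem abs_dotProduct_le (hp : 0 ≤ p) (f : A → ℝ) : |p ⬝ᵥ f| ≤ p ⬝ᵥ |f| := by
  simpa only [dotProduct, abs_mul, abs_of_nonneg (hp _), Pi.abs_apply] using
    Finset.abs_sum_le_sum_abs (fun a => p a * f a) Finset.univ

theorem norm_centered_le (hp : p ∈ stdSimplex ℝ A) (f : A → ℝ) : ‖centered p f‖ ≤ 2 * ‖f‖ := by
  refine (pi_norm_le_iff_of_nonneg (by positivity)).2 fun a => ?_
  have hmean : |p ⬝ᵥ f| ≤ ‖f‖ := (abs_dotProduct_le hp.1 f).trans (dotProduct_abs_le_norm hp f)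
  calc |centered p f a| = |f a - p ⬝ᵥ f| := by simp [centered]
    _ ≤ |f a| + |p ⬝ᵥ f| := abs_sub _ _
    _ ≤ 2 * ‖f‖ := by linarith [norm_le_pi_norm f a, Real.norm_eq_abs (f a)]

theorem dotProduct_abs_centered_le (hp : p ∈ stdSimplex ℝ A) (f : A → ℝ) :
    p ⬝ᵥ |centered p f| ≤ 2 * (p ⬝ᵥ |f|) :=
  calc p ⬝ᵥ |centered p f| ≤ p ⬝ᵥ (|f| + |p ⬝ᵥ f| • 1) :=
        dotProduct_le_dotProduct_of_nonneg_left
          (fun a => by simpa [centered] using abs_sub (f a) (p ⬝ᵥ f)) hp.1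
    _ = p ⬝ᵥ |f| + |p ⬝ᵥ f| := by
        rw [dotProduct_add, dotProduct_smul, dotProduct_one, hp.2, smul_eq_mul, mul_one]
    _ ≤ 2 * (p ⬝ᵥ |f|) := by linarith [abs_dotProduct_le hp.1 f]

theorem dotProduct_abs_nonneg (hp : 0 ≤ p) (f : A → ℝ) : 0 ≤ p ⬝ᵥ |f| :=
  dotProduct_nonneg_of_nonneg hp (abs_nonneg f)

-- Only `g` is centered here; centering both arguments would double the bound.
theorem abs_cumulant₂_le (hp : p ∈ stdSimplex ℝ A) (f g : A → ℝ) :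
    |cumulant₂ p f g| ≤ 2 * (p ⬝ᵥ |f|) * ‖g‖ := by
  have hf := dotProduct_abs_nonneg hp.1 f
  calc |cumulant₂ p f g| = |p ⬝ᵥ (f * centered p g)| := by rw [dotProduct_mul_centered hp.2]
    _ ≤ p ⬝ᵥ |f| * ‖centered p g‖ := abs_dotProduct_mul_le hp.1 _ _
    _ ≤ p ⬝ᵥ |f| * (2 * ‖g‖) := by gcongr; exact norm_centered_le hp g
    _ = 2 * (p ⬝ᵥ |f|) * ‖g‖ := by ring

theorem abs_cumulant₃_le (hp : p ∈ stdSimplex ℝ A) (f g h : A → ℝ) :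
    |cumulant₃ p f g h| ≤ 8 * (p ⬝ᵥ |f|) * ‖g‖ * ‖h‖ := by
  have hf := dotProduct_abs_nonneg hp.1 f
  calc |cumulant₃ p f g h| ≤ p ⬝ᵥ |centered p f| * ‖centered p g * centered p h‖ := by
        rw [cumulant₃, mul_assoc]; exact abs_dotProduct_mul_le hp.1 _ _
    _ ≤ p ⬝ᵥ |centered p f| * (‖centered p g‖ * ‖centered p h‖) := by
        gcongr
        · exact dotProduct_abs_nonneg hp.1 _
        · exact norm_mul_le _ _
    _ ≤ 2 * (p ⬝ᵥ |f|) * (2 * ‖g‖ * (2 * ‖h‖)) := by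
        gcongr
        exacts [dotProduct_abs_centered_le hp f, norm_centered_le hp g, norm_centered_le hp h]
    _ = 8 * (p ⬝ᵥ |f|) * ‖g‖ * ‖h‖ := by ring

theorem abs_cumulant₂_mul_cumulant₂_le (hp : p ∈ stdSimplex ℝ A) (f g h k : A → ℝ) :
    |cumulant₂ p f g * cumulant₂ p h k| ≤ 4 * (p ⬝ᵥ |f|) * ‖g‖ * ‖h‖ * ‖k‖ := by
  have hf := dotProduct_abs_nonneg hp.1 f
  calc |cumulant₂ p f g * cumulant₂ p h k| = |cumulant₂ p f g| * |cumulant₂ p h k| := abs_mul _ _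
    _ ≤ 2 * (p ⬝ᵥ |f|) * ‖g‖ * (2 * (p ⬝ᵥ |h|) * ‖k‖) := by
        gcongr
        exacts [abs_cumulant₂_le hp f g, abs_cumulant₂_le hp h k]
    _ ≤ 2 * (p ⬝ᵥ |f|) * ‖g‖ * (2 * ‖h‖ * ‖k‖) := by
        gcongr
        exact dotProduct_abs_le_norm hp h
    _ = 4 * (p ⬝ᵥ |f|) * ‖g‖ * ‖h‖ * ‖k‖ := by ring

theorem abs_fourth_central_moment_le (hp : p ∈ stdSimplex ℝ A) (f g h k : A → ℝ) :
    |p ⬝ᵥ (centered p f * centered p g * centered p h * centered p k)| ≤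
      16 * (p ⬝ᵥ |f|) * ‖g‖ * ‖h‖ * ‖k‖ := by
  have hf := dotProduct_abs_nonneg hp.1 f
  calc |p ⬝ᵥ (centered p f * centered p g * centered p h * centered p k)|
      ≤ p ⬝ᵥ |centered p f| * ‖centered p g * centered p h * centered p k‖ := by
        rw [mul_assoc, mul_assoc, ← mul_assoc (centered p g)]
        exact abs_dotProduct_mul_le hp.1 _ _
    _ ≤ p ⬝ᵥ |centered p f| * (‖centered p g‖ * ‖centered p h‖ * ‖centered p k‖) := by
        gcongr
        · exact dotProduct_abs_nonneg hp.1 _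
        · exact norm_mul₃_le
    _ ≤ 2 * (p ⬝ᵥ |f|) * (2 * ‖g‖ * (2 * ‖h‖) * (2 * ‖k‖)) := by
        gcongr
        exacts [dotProduct_abs_centered_le hp f, norm_centered_le hp g, norm_centered_le hp h,
          norm_centered_le hp k]
    _ = 16 * (p ⬝ᵥ |f|) * ‖g‖ * ‖h‖ * ‖k‖ := by ring

theorem abs_cumulant₄_le (hp : p ∈ stdSimplex ℝ A) (f g h k : A → ℝ) :
    |cumulant₄ p f g h k| ≤ 28 * (p ⬝ᵥ |f|) * ‖g‖ * ‖h‖ * ‖k‖ := by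
  have hmoment := abs_fourth_central_moment_le hp f g h k
  have hfg := abs_cumulant₂_mul_cumulant₂_le hp f g h k
  have hfh := abs_cumulant₂_mul_cumulant₂_le hp f h g k
  have hfk := abs_cumulant₂_mul_cumulant₂_le hp f k g h
  rw [cumulant₄]
  rw [abs_le] at *
  constructor <;> linarith

theorem dotProduct_surprisal_le_log_card (hp : p ∈ stdSimplex ℝ A) :
    p ⬝ᵥ surprisal p ≤ Real.log (Fintype.card A) := by
  cases isEmpty_or_nonempty A
  · simp
  have hcard : (0 : ℝ) < Fintype.card A := by exact_mod_cast Fintype.card_pos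
  have hentropy : p ⬝ᵥ surprisal p = ∑ a, Real.negMulLog (p a) := by
    simp only [dotProduct, surprisal, Real.negMulLog, mul_neg, neg_mul]
  have hjensen := Real.concaveOn_negMulLog.le_map_sum (t := Finset.univ) (p := p)
    (w := fun _ => (Fintype.card A : ℝ)⁻¹) (fun _ _ => by positivity)
    (by simp [hcard.ne']) (fun a _ => hp.1 a)
  simp only [smul_eq_mul] at hjensen
  rw [← Finset.mul_sum, ← Finset.mul_sum, hp.2, mul_one, Real.negMulLog, Real.log_inv, neg_mul_neg,
    ← hentropy] at hjensen
  exact le_of_mul_le_mul_left hjensen (inv_pos.2 hcard)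

theorem dotProduct_abs_surprisal_le_log_card (hp : p ∈ stdSimplex ℝ A) :
    p ⬝ᵥ |surprisal p| ≤ Real.log (Fintype.card A) := by
  have hnonneg : 0 ≤ surprisal p := fun a =>
    neg_nonneg.2 (Real.log_nonpos (hp.1 a) (mem_Icc_of_mem_stdSimplex hp a).2)
  rw [abs_of_nonneg hnonneg]
  exact dotProduct_surprisal_le_log_card hp

end Bounds

namespace HasTiltAt

variable {p f g h : ℝ → A → ℝ} {f' g' h' u v w : A → ℝ} {t : ℝ}

theorem hasDerivAt_dotProduct (hp : HasTiltAt p w t) (hf : HasDerivAt f f' t) :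
    HasDerivAt (fun τ => p τ ⬝ᵥ f τ) (p t ⬝ᵥ (f' + f t * centered (p t) w)) t := by
  have hsum := HasDerivAt.fun_sum (u := Finset.univ) fun a _ =>
    (hasDerivAt_pi.1 hp.hasDerivAt a).fun_mul (hasDerivAt_pi.1 hf a)
  refine hsum.congr_deriv (Finset.sum_congr rfl fun a _ => ?_)
  simp only [Pi.mul_apply, Pi.add_apply]
  ring

theorem hasDerivAt_centered (hp : HasTiltAt p w t) (hf : HasDerivAt f f' t) :
    HasDerivAt (fun τ => centered (p τ) (f τ))
      (centered (p t) f' - cumulant₂ (p t) (f t) w • 1) t := by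
  refine (hf.sub ((hp.hasDerivAt_dotProduct hf).smul_const (1 : A → ℝ))).congr_deriv ?_
  rw [dotProduct_add, dotProduct_mul_centered hp.sum_eq_one, centered, add_smul, sub_sub]

theorem hasDerivAt_cumulant₂ (hp : HasTiltAt p w t) (hf : HasDerivAt f f' t)
    (hg : HasDerivAt g g' t) :
    HasDerivAt (fun τ => cumulant₂ (p τ) (f τ) (g τ))
      (cumulant₃ (p t) (f t) (g t) w + cumulant₂ (p t) f' (g t) + cumulant₂ (p t) (f t) g') t := by
  refine (hp.hasDerivAt_dotProduct
    ((hp.hasDerivAt_centered hf).fun_mul (hp.hasDerivAt_centered hg))).congr_deriv ?_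
  simp only [sub_mul, mul_sub, smul_one_mul, mul_smul_one, dotProduct_add, dotProduct_sub,
    dotProduct_smul, dotProduct_centered hp.sum_eq_one, smul_zero, sub_zero, cumulant₂, cumulant₃]
  ring

theorem hasDerivAt_cumulant₃ (hp : HasTiltAt p w t) (hf : HasDerivAt f f' t)
    (hg : HasDerivAt g g' t) (hh : HasDerivAt h h' t) :
    HasDerivAt (fun τ => cumulant₃ (p τ) (f τ) (g τ) (h τ))
      (cumulant₄ (p t) (f t) (g t) (h t) w + cumulant₃ (p t) f' (g t) (h t) +
        cumulant₃ (p t) (f t) g' (h t) + cumulant₃ (p t) (f t) (g t) h') t := by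
  refine (hp.hasDerivAt_dotProduct (((hp.hasDerivAt_centered hf).fun_mul
    (hp.hasDerivAt_centered hg)).fun_mul (hp.hasDerivAt_centered hh))).congr_deriv ?_
  simp only [sub_mul, mul_sub, add_mul, one_mul, mul_smul_one, smul_mul_assoc, dotProduct_add,
    dotProduct_sub, dotProduct_smul, smul_eq_mul, cumulant₂, cumulant₃, cumulant₄]
  ring

theorem hasDerivAt_surprisal (hp : HasTiltAt p w t) (hpos : ∀ a, p t a ≠ 0) :
    HasDerivAt (fun τ => surprisal (p τ)) (-centered (p t) w) t := by
  refine hasDerivAt_pi.2 fun a =>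
    ((hasDerivAt_pi.1 hp.hasDerivAt a).log (hpos a)).fun_neg.congr_deriv ?_
  rw [Pi.mul_apply, mul_div_cancel_left₀ _ (hpos a), Pi.neg_apply]

theorem hasDerivAt_entropy (hp : HasTiltAt p w t) (hpos : ∀ a, p t a ≠ 0) :
    HasDerivAt (fun τ => p τ ⬝ᵥ surprisal (p τ)) (cumulant₂ (p t) (surprisal (p t)) w) t := by
  refine (hp.hasDerivAt_dotProduct (hp.hasDerivAt_surprisal hpos)).congr_deriv ?_
  rw [dotProduct_add, dotProduct_neg, dotProduct_centered hp.sum_eq_one, neg_zero, zero_add,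
    dotProduct_mul_centered hp.sum_eq_one]

theorem hasDerivAt_cumulant₂_surprisal (hp : HasTiltAt p w t) (hpos : ∀ a, p t a ≠ 0) :
    HasDerivAt (fun τ => cumulant₂ (p τ) (surprisal (p τ)) u)
      (cumulant₃ (p t) (surprisal (p t)) u w - cumulant₂ (p t) u w) t := by
  refine (hp.hasDerivAt_cumulant₂ (hp.hasDerivAt_surprisal hpos)
    (hasDerivAt_const t u)).congr_deriv ?_
  simp only [cumulant₂, centered_neg_centered hp.sum_eq_one, centered_zero, mul_zero,
    dotProduct_zero, add_zero, neg_mul, dotProduct_neg, ← sub_eq_add_neg]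
  rw [mul_comm]

theorem hasDerivAt_cumulant₃_surprisal_sub (hp : HasTiltAt p w t) (hpos : ∀ a, p t a ≠ 0) :
    HasDerivAt (fun τ => cumulant₃ (p τ) (surprisal (p τ)) u v - cumulant₂ (p τ) u v)
      (cumulant₄ (p t) (surprisal (p t)) u v w - 2 * cumulant₃ (p t) u v w) t := by
  have hu := hasDerivAt_const t u
  have hv := hasDerivAt_const t v
  refine ((hp.hasDerivAt_cumulant₃ (hp.hasDerivAt_surprisal hpos) hu hv).fun_sub
    (hp.hasDerivAt_cumulant₂ hu hv)).congr_deriv ?_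
  have hrotate : cumulant₃ (p t) (-centered (p t) w) u v = -cumulant₃ (p t) u v w := by
    rw [cumulant₃, cumulant₃, centered_neg_centered hp.sum_eq_one, neg_mul, neg_mul,
      dotProduct_neg, mul_assoc, mul_comm]
  rw [hrotate]
  simp only [cumulant₂, cumulant₃, centered_zero, mul_zero, zero_mul, dotProduct_zero]
  ring

end HasTiltAt

section Softmax

variable {S : Type*}

theorem entropyVec_apply (θ : S × A → ℝ) (s : S) :
    entropyVec θ s = softmax θ s ⬝ᵥ surprisal (softmax θ s) := by
  simp only [entropyVec, dotProduct, surprisal, mul_neg, Finset.sum_neg_distrib]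

variable [Nonempty A]

theorem softmax_pos (θ : S × A → ℝ) (s : S) (a : A) : 0 < softmax θ s a := by
  unfold softmax
  positivity

theorem softmax_mem_stdSimplex (θ : S × A → ℝ) (s : S) : softmax θ s ∈ stdSimplex ℝ A := by
  refine ⟨fun a => (softmax_pos θ s a).le, ?_⟩
  have hZ : (∑ a, Real.exp (θ (s, a))) ≠ 0 := by positivity
  simp only [softmax]
  rw [← Finset.sum_div, div_self hZ]

theorem hasTiltAt_softmax {θ : ℝ → S × A → ℝ} {w : S × A → ℝ} {t : ℝ} (hθ : HasDerivAt θ w t)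
    (s : S) : HasTiltAt (fun τ => softmax (θ τ) s) (Function.curry w s) t := by
  refine ⟨(softmax_mem_stdSimplex (θ t) s).2, hasDerivAt_pi.2 fun a => ?_⟩
  have hexp (b : A) : HasDerivAt (fun τ => Real.exp (θ τ (s, b)))
      (Real.exp (θ t (s, b)) * w (s, b)) t := (hasDerivAt_pi.1 hθ (s, b)).exp
  have hZ : (∑ b, Real.exp (θ t (s, b))) ≠ 0 := by positivity
  refine ((hexp a).fun_div (HasDerivAt.fun_sum fun b _ => hexp b) hZ).congr_deriv ?_
  simp only [Pi.mul_apply, centered, Pi.sub_apply, Pi.smul_apply, Pi.one_apply, dotProduct,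
    softmax, Function.curry_apply, smul_eq_mul, mul_one, div_mul_eq_mul_div, ← Finset.sum_div]
  field_simp

theorem hasTiltAt_softmax_add_smul (θ w : S × A → ℝ) (s : S) :
    HasTiltAt (fun τ => softmax (θ + τ • w) s) (Function.curry w s) 0 := by
  refine hasTiltAt_softmax (hasDerivAt_pi.2 fun i => ?_) s
  exact (((hasDerivAt_id (0 : ℝ)).mul_const (w i)).const_add (θ i)).congr_deriv (one_mul _)

variable [Fintype S]

open scoped ContDiff in
theorem contDiff_entropyVec : ContDiff ℝ ω (entropyVec (S := S) (A := A)) := by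
  have hsoftmax (s : S) (a : A) : ContDiff ℝ ω fun θ : S × A → ℝ => softmax θ s a := by
    unfold softmax
    fun_prop (disch := intro; positivity)
  refine contDiff_pi.2 fun s => ContDiff.neg (ContDiff.sum fun a _ => ?_)
  exact (hsoftmax s a).mul ((hsoftmax s a).log fun θ => (softmax_pos θ s a).ne')

theorem iteratedFDeriv_one_entropyVec (θ u : S × A → ℝ) :
    iteratedFDeriv ℝ 1 entropyVec θ ![u] = fun s =>
      cumulant₂ (softmax θ s) (surprisal (softmax θ s)) (Function.curry u s) := by
  refine iteratedFDeriv_succ_vecCons_of_hasLineDerivAt (contDiff_entropyVec.of_le le_top).contDiffAt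
    (fun _ => iteratedFDeriv_zero_apply _) (hasDerivAt_pi.2 fun s => ?_)
  simpa only [entropyVec_apply, zero_smul, add_zero] using
    (hasTiltAt_softmax_add_smul θ u s).hasDerivAt_entropy fun a => (softmax_pos _ s a).ne'

theorem iteratedFDeriv_two_entropyVec (θ u v : S × A → ℝ) :
    iteratedFDeriv ℝ 2 entropyVec θ ![v, u] = fun s =>
      cumulant₃ (softmax θ s) (surprisal (softmax θ s)) (Function.curry u s) (Function.curry v s) -
        cumulant₂ (softmax θ s) (Function.curry u s) (Function.curry v s) := by
  refine iteratedFDeriv_succ_vecCons_of_hasLineDerivAt (contDiff_entropyVec.of_le le_top).contDiffAt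
    (fun θ => iteratedFDeriv_one_entropyVec θ u) (hasDerivAt_pi.2 fun s => ?_)
  simpa only [zero_smul, add_zero] using
    (hasTiltAt_softmax_add_smul θ v s).hasDerivAt_cumulant₂_surprisal
      fun a => (softmax_pos _ s a).ne'

theorem iteratedFDeriv_three_entropyVec (θ u v w : S × A → ℝ) :
    iteratedFDeriv ℝ 3 entropyVec θ ![w, v, u] = fun s =>
      cumulant₄ (softmax θ s) (surprisal (softmax θ s)) (Function.curry u s) (Function.curry v s)
          (Function.curry w s) -
        2 * cumulant₃ (softmax θ s) (Function.curry u s) (Function.curry v s)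
          (Function.curry w s) := by
  refine iteratedFDeriv_succ_vecCons_of_hasLineDerivAt (contDiff_entropyVec.of_le le_top).contDiffAt
    (fun θ => iteratedFDeriv_two_entropyVec θ u v) (hasDerivAt_pi.2 fun s => ?_)
  simpa only [zero_smul, add_zero] using
    (hasTiltAt_softmax_add_smul θ w s).hasDerivAt_cumulant₃_surprisal_sub
      fun a => (softmax_pos _ s a).ne'

theorem norm_iteratedFDeriv_one_entropyVec_le (θ u : S × A → ℝ) :
    ‖iteratedFDeriv ℝ 1 entropyVec θ ![u]‖ ≤ 2 * Real.log (Fintype.card A) * ‖u‖ := by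
  rw [iteratedFDeriv_one_entropyVec]
  refine (pi_norm_le_iff_of_nonneg (by positivity)).2 fun s => ?_
  have hp := softmax_mem_stdSimplex θ s
  refine (abs_cumulant₂_le hp _ _).trans ?_
  gcongr
  exacts [dotProduct_abs_surprisal_le_log_card hp, norm_curry_apply_le u s]

theorem norm_iteratedFDeriv_two_entropyVec_le (θ u v : S × A → ℝ) :
    ‖iteratedFDeriv ℝ 2 entropyVec θ ![u, v]‖ ≤
      (2 + 8 * Real.log (Fintype.card A)) * ‖u‖ * ‖v‖ := by
  rw [iteratedFDeriv_two_entropyVec]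
  refine (pi_norm_le_iff_of_nonneg (by positivity)).2 fun s => ?_
  have hp := softmax_mem_stdSimplex θ s
  have hu := norm_curry_apply_le u s
  have hv := norm_curry_apply_le v s
  calc _ ≤ 8 * (softmax θ s ⬝ᵥ |surprisal (softmax θ s)|) * ‖Function.curry v s‖ *
            ‖Function.curry u s‖ +
          2 * (softmax θ s ⬝ᵥ |Function.curry v s|) * ‖Function.curry u s‖ :=
        (abs_sub _ _).trans (add_le_add (abs_cumulant₃_le hp _ _ _) (abs_cumulant₂_le hp _ _))
    _ ≤ 8 * Real.log (Fintype.card A) * ‖v‖ * ‖u‖ + 2 * ‖v‖ * ‖u‖ := by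
        gcongr
        exacts [dotProduct_abs_surprisal_le_log_card hp, (dotProduct_abs_le_norm hp _).trans hv]
    _ = (2 + 8 * Real.log (Fintype.card A)) * ‖u‖ * ‖v‖ := by ring

theorem norm_iteratedFDeriv_three_entropyVec_le (θ u v w : S × A → ℝ) :
    ‖iteratedFDeriv ℝ 3 entropyVec θ ![u, v, w]‖ ≤
      (16 + 28 * Real.log (Fintype.card A)) * ‖u‖ * ‖v‖ * ‖w‖ := by
  rw [iteratedFDeriv_three_entropyVec]
  refine (pi_norm_le_iff_of_nonneg (by positivity)).2 fun s => ?_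
  have hp := softmax_mem_stdSimplex θ s
  have hu := norm_curry_apply_le u s
  have hv := norm_curry_apply_le v s
  have hw := norm_curry_apply_le w s
  calc _ ≤ 28 * (softmax θ s ⬝ᵥ |surprisal (softmax θ s)|) * ‖Function.curry w s‖ *
            ‖Function.curry v s‖ * ‖Function.curry u s‖ +
          2 * (8 * (softmax θ s ⬝ᵥ |Function.curry w s|) * ‖Function.curry v s‖ *
            ‖Function.curry u s‖) := by
        refine (abs_sub _ _).trans (add_le_add (abs_cumulant₄_le hp _ _ _ _) ?_)
        rw [abs_mul, abs_two]
        exact mul_le_mul_of_nonneg_left (abs_cumulant₃_le hp _ _ _) zero_le_two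
    _ ≤ 28 * Real.log (Fintype.card A) * ‖w‖ * ‖v‖ * ‖u‖ + 2 * (8 * ‖w‖ * ‖v‖ * ‖u‖) := by
        gcongr
        exacts [dotProduct_abs_surprisal_le_log_card hp, (dotProduct_abs_le_norm hp _).trans hw]
    _ = (16 + 28 * Real.log (Fintype.card A)) * ‖u‖ * ‖v‖ * ‖w‖ := by ring

end Softmax

end FiniteProbability

/-- Bounds on the first three directional derivatives of `θ ↦ H(π_θ)`.
Sup norms `‖·‖_∞` are the Pi-type norms on `S × A → ℝ` and `S → ℝ`. -/
theorem stmt6 {S A : Type*} [Fintype S] [Fintype A] [Nonempty S] [Nonempty A]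
    (θ u v w : S × A → ℝ) :
    ‖iteratedFDeriv ℝ 1 (entropyVec (S := S) (A := A)) θ ![u]‖ ≤
      2 * Real.log (Fintype.card A) * ‖u‖ ∧
    ‖iteratedFDeriv ℝ 2 (entropyVec (S := S) (A := A)) θ ![u, v]‖ ≤
      (4 + 8 * Real.log (Fintype.card A)) * ‖u‖ * ‖v‖ ∧
    ‖iteratedFDeriv ℝ 3 (entropyVec (S := S) (A := A)) θ ![u, v, w]‖ ≤
      (56 + 48 * Real.log (Fintype.card A)) * ‖u‖ * ‖v‖ * ‖w‖ := by
  refine ⟨norm_iteratedFDeriv_one_entropyVec_le θ u,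
    (norm_iteratedFDeriv_two_entropyVec_le θ u v).trans ?_,
    (norm_iteratedFDeriv_three_entropyVec_le θ u v w).trans ?_⟩
  all_goals gcongr <;> norm_num
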